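/- arXiv:2204.09756 — 3 statements merged into one kernel-verified Lean document; each statement's English description precedes it below -/
import Mathlib

section
/- Let A ∈ ℝ^{n×n}. Every eigenvalue of A (i.e., every root in ℂ of its characteristic polynomial) has strictly negative real part if and only if there exists a symmetric positive definite matrix P ∈ ℝ^{n×n} such that −AᵀP − PA is positive definite. -/
open Matrix

/-- A real square matrix is Hurwitz if every root in `ℂ` of its characteristic
polynomial has strictly negative real part. -/
def IsHurwitz {n : ℕ} (A : Matrix (Fin n) (Fin n) ℝ) : Prop :=
  ∀ z : ℂ, ((A.map (Complex.ofReal)).charpoly).IsRoot z → z.re < 0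

lemma root_iff_aux {n : ℕ} (A : Matrix (Fin n) (Fin n) ℝ) (z : ℂ) :
    ((A.map (Complex.ofReal)).charpoly).IsRoot z ↔
      (z • (1 : Matrix (Fin n) (Fin n) ℂ) - A.map Complex.ofReal).det = 0 := by
  rw [Polynomial.IsRoot.def, Matrix.eval_charpoly, Matrix.smul_one_eq_diagonal]
  rfl

lemma quad_aux {n : ℕ} (A P : Matrix (Fin n) (Fin n) ℝ) (hP : Pᵀ = P) (x : Fin n → ℝ) :
    x ⬝ᵥ ((-Aᵀ * P - P * A) *ᵥ x) = -2 * ((A *ᵥ x) ⬝ᵥ (P *ᵥ x)) := by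
  have h1 : x ⬝ᵥ ((Aᵀ * P) *ᵥ x) = (A *ᵥ x) ⬝ᵥ (P *ᵥ x) := by
    rw [← Matrix.mulVec_mulVec, Matrix.dotProduct_mulVec, Matrix.vecMul_transpose]
  have h2 : x ⬝ᵥ ((P * A) *ᵥ x) = (A *ᵥ x) ⬝ᵥ (P *ᵥ x) := by
    rw [← Matrix.mulVec_mulVec, Matrix.dotProduct_mulVec, ← Matrix.mulVec_transpose, hP,
      dotProduct_comm]
  rw [Matrix.sub_mulVec, dotProduct_sub, h2, Matrix.neg_mul, Matrix.neg_mulVec, dotProduct_neg, h1]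
  ring

lemma reverse_aux {n : ℕ} (A P : Matrix (Fin n) (Fin n) ℝ) (hP : P.PosDef)
    (hQ : (-Aᵀ * P - P * A).PosDef) : IsHurwitz A := by
  intro z hz
  rw [root_iff_aux, ← Matrix.exists_mulVec_eq_zero_iff] at hz
  obtain ⟨v, hv, h⟩ := hz
  rw [Matrix.sub_mulVec, Matrix.smul_mulVec, Matrix.one_mulVec, sub_eq_zero] at h
  set x : Fin n → ℝ := fun i => (v i).re with hx
  set y : Fin n → ℝ := fun i => (v i).im with hy
  have hAx : A *ᵥ x = z.re • x - z.im • y := by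
    ext i
    have := congrArg Complex.re (congrFun h i)
    simp [Matrix.mulVec, dotProduct] at this
    simp [Matrix.mulVec, dotProduct, hx, hy, this]
  have hAy : A *ᵥ y = z.im • x + z.re • y := by
    ext i
    have := congrArg Complex.im (congrFun h i)
    simp [Matrix.mulVec, dotProduct] at this
    simp [Matrix.mulVec, dotProduct, hx, hy, ← this]
    ring
  have hPt : Pᵀ = P := by simpa [Matrix.IsHermitian] using hP.1
  have q1 := quad_aux A P hPt x
  have q2 := quad_aux A P hPt y
  have hc : y ⬝ᵥ (P *ᵥ x) = x ⬝ᵥ (P *ᵥ y) := by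
    rw [Matrix.dotProduct_mulVec, ← Matrix.mulVec_transpose, hPt, dotProduct_comm]
  rw [hAx, sub_dotProduct, smul_dotProduct, smul_dotProduct] at q1
  rw [hAy, add_dotProduct, smul_dotProduct, smul_dotProduct] at q2
  simp only [smul_eq_mul] at q1 q2
  have P0 : ∀ M : Matrix (Fin n) (Fin n) ℝ, M.PosDef → ∀ w : Fin n → ℝ, 0 ≤ w ⬝ᵥ (M *ᵥ w) := by
    intro M hM w
    simpa using hM.posSemidef.dotProduct_mulVec_nonneg w
  have P1 : ∀ M : Matrix (Fin n) (Fin n) ℝ, M.PosDef → 0 < x ⬝ᵥ (M *ᵥ x) + y ⬝ᵥ (M *ᵥ y) := by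
    intro M hM
    have : x ≠ 0 ∨ y ≠ 0 := by
      by_contra! hcon
      apply hv
      ext i
      exact Complex.ext (congrFun hcon.1 i) (congrFun hcon.2 i)
    rcases this with h | h
    · have := hM.dotProduct_mulVec_pos h
      simp at this
      linarith [P0 M hM y]
    · have := hM.dotProduct_mulVec_pos h
      simp at this
      linarith [P0 M hM x]
  have e1 := P1 _ hP
  have e2 := P1 _ hQ
  rw [q1, q2, hc] at e2
  by_contra! hre
  nlinarith [mul_nonneg hre e1.le]

open scoped Matrix.Norms.L2Operator in
lemma pow_aux {n : ℕ} [Nonempty (Fin n)] (C : Matrix (Fin n) (Fin n) ℝ)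
    (h : ∀ z : ℂ, 1 ≤ ‖z‖ →
      IsUnit (z • (1 : Matrix (Fin n) (Fin n) ℂ) - C.map Complex.ofReal)) :
    ∃ k : ℕ, (1 - (C ^ k)ᵀ * C ^ k).PosDef := by
  set D : Matrix (Fin n) (Fin n) ℂ := C.map Complex.ofReal with hD
  have hr : spectralRadius ℂ D < (1 : NNReal) := by
    apply spectrum.spectralRadius_lt_of_forall_lt
    intro z hz
    by_contra! hc
    apply hz
    have := h z (by exact_mod_cast hc)
    rw [spectrum.mem_resolventSet_iff, Algebra.algebraMap_eq_smul_one]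
    exact this
  have ht := spectrum.pow_nnnorm_pow_one_div_tendsto_nhds_spectralRadius D
  obtain ⟨k, hk, hk0⟩ := ((ht.eventually_lt_const hr).and (Filter.eventually_gt_atTop 0)).exists
  have hlt : ‖D ^ k‖ < 1 := by
    by_contra! hc
    have : (1 : ENNReal) ≤ (‖D ^ k‖₊ : ENNReal) := by exact_mod_cast hc
    have := ENNReal.one_le_rpow this (z := 1 / (k : ℝ)) (by positivity)
    exact absurd hk (not_lt.mpr (by simpa using this))
  have hDk : D ^ k = (C ^ k).map Complex.ofReal := by
    have := map_pow (Complex.ofRealHom.mapMatrix (m := Fin n)) C k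
    exact this.symm
  refine ⟨k, ?_⟩
  generalize C ^ k = E at *
  refine Matrix.PosDef.of_dotProduct_mulVec_pos ?_ ?_
  · simp [Matrix.IsHermitian, Matrix.transpose_sub]
  · intro x hx
    have e : star x ⬝ᵥ ((1 - Eᵀ * E) *ᵥ x) = x ⬝ᵥ x - (E *ᵥ x) ⬝ᵥ (E *ᵥ x) := by
      rw [Matrix.sub_mulVec, dotProduct_sub, ← Matrix.mulVec_mulVec, Matrix.dotProduct_mulVec _ Eᵀ,
        Matrix.vecMul_transpose]
      simp
    rw [e]
    set X : EuclideanSpace ℂ (Fin n) := WithLp.toLp 2 (fun i => (x i : ℂ)) with hX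
    have b := Matrix.l2_opNorm_mulVec (D ^ k) X
    have n1 : ‖X‖ ^ 2 = x ⬝ᵥ x := by
      rw [EuclideanSpace.norm_sq_eq]
      simp [hX, dotProduct, sq]
    have n2 : ‖WithLp.toLp 2 (D ^ k *ᵥ X.ofLp)‖ ^ 2 = (E *ᵥ x) ⬝ᵥ (E *ᵥ x) := by
      have : ∀ i, (D ^ k *ᵥ X.ofLp) i = (((E *ᵥ x) i : ℝ) : ℂ) := by
        intro i
        simp [hDk, hX, Matrix.mulVec, dotProduct]
      rw [EuclideanSpace.norm_sq_eq]
      simp [this, dotProduct, sq]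
    have hpos : 0 < ‖X‖ := by
      rw [norm_pos_iff]
      intro h0
      apply hx
      ext i
      have := congrArg (fun Y : EuclideanSpace ℂ (Fin n) => Y i) h0
      simpa [hX] using this
    rw [← n1, ← n2]
    have b2 : ‖WithLp.toLp 2 (D ^ k *ᵥ X.ofLp)‖ < ‖X‖ := by
      refine lt_of_le_of_lt b ?_
      nlinarith
    nlinarith [norm_nonneg (WithLp.toLp 2 (D ^ k *ᵥ X.ofLp))]

lemma stein_aux {n : ℕ} (C : Matrix (Fin n) (Fin n) ℝ) (k : ℕ)
    (h : (1 - (C ^ k)ᵀ * C ^ k).PosDef) (hn : Nonempty (Fin n)) :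
    ∃ P : Matrix (Fin n) (Fin n) ℝ, P.PosDef ∧ (P - Cᵀ * P * C).PosDef := by
  refine ⟨∑ j ∈ Finset.range k, (C ^ j)ᵀ * C ^ j, ?_, ?_⟩
  · rcases k with _ | k
    · exfalso
      obtain ⟨i⟩ := hn
      have := h.diag_pos (i := i)
      simp at this
    · rw [Finset.sum_range_succ']
      have : (∑ j ∈ Finset.range k, (C ^ (j+1))ᵀ * C ^ (j+1)).PosSemidef := by
        apply Matrix.posSemidef_sum
        intro i _
        simpa using Matrix.posSemidef_conjTranspose_mul_self (C ^ (i+1))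
      refine Matrix.PosDef.posSemidef_add this ?_
      simpa using Matrix.PosDef.one
  · have : ∀ k : ℕ, (∑ j ∈ Finset.range k, (C ^ j)ᵀ * C ^ j) -
        Cᵀ * (∑ j ∈ Finset.range k, (C ^ j)ᵀ * C ^ j) * C = 1 - (C ^ k)ᵀ * C ^ k := by
      intro k
      induction k with
      | zero => simp
      | succ k ih =>
        have e : (C ^ (k+1))ᵀ * C ^ (k+1) = Cᵀ * ((C ^ k)ᵀ * C ^ k) * C := by
          rw [pow_succ, Matrix.transpose_mul]; noncomm_ring
        rw [Finset.sum_range_succ, e, Matrix.mul_add, Matrix.add_mul, add_sub_add_comm, ih]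
        abel
    rw [this]
    exact h

lemma forward_aux {n : ℕ} (A : Matrix (Fin n) (Fin n) ℝ) (hn : Nonempty (Fin n))
    (hA : IsHurwitz A) :
    ∃ P : Matrix (Fin n) (Fin n) ℝ, P.PosDef ∧ (-Aᵀ * P - P * A).PosDef := by
  set φ := Complex.ofRealHom.mapMatrix (m := Fin n) with hφ
  have hu : ∀ z : ℂ, 0 ≤ z.re → IsUnit (z • (1 : Matrix (Fin n) (Fin n) ℂ) - φ A) := by
    intro z hz
    rw [Matrix.isUnit_iff_isUnit_det, isUnit_iff_ne_zero]
    intro h0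
    exact absurd (hA z ((root_iff_aux A z).2 h0)) (not_lt.mpr hz)
  have h1 : IsUnit (1 - A) := by
    rw [Matrix.isUnit_iff_isUnit_det, isUnit_iff_ne_zero]
    intro h0
    have := hu 1 (by simp)
    rw [one_smul, ← map_one φ, ← map_sub, Matrix.isUnit_iff_isUnit_det, hφ,
      ← RingHom.map_det, h0] at this
    simp at this
  obtain ⟨U, hU⟩ := h1
  set R : Matrix (Fin n) (Fin n) ℝ := ↑U⁻¹ with hR
  have hR1 : (1 - A) * R = 1 := by rw [← hU]; simp [hR]
  have hR2 : R * (1 - A) = 1 := by rw [← hU]; simp [hR]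
  have hRu : IsUnit (φ R) := (U⁻¹.isUnit).map φ
  have hC : ∀ z : ℂ, 1 ≤ ‖z‖ →
      IsUnit (z • (1 : Matrix (Fin n) (Fin n) ℂ) - φ ((1 + A) * R)) := by
    intro z hz
    have e : z • (1 : Matrix (Fin n) (Fin n) ℂ) - φ ((1 + A) * R) =
        ((z - 1) • (1 : Matrix (Fin n) (Fin n) ℂ) - (z + 1) • φ A) * φ R := by
      have : (1 - φ A) * φ R = 1 := by
        rw [← map_one φ, ← map_sub, ← map_mul, hR1]
      have h3 : z • (1 : Matrix (Fin n) (Fin n) ℂ) = z • ((1 - φ A) * φ R) := by rw [this]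
      rw [h3, map_mul, map_add, map_one, ← smul_mul_assoc, ← sub_mul]
      congr 1
      module
    rw [e]
    refine IsUnit.mul ?_ hRu
    by_cases hz1 : z + 1 = 0
    · rw [hz1, zero_smul, sub_zero]
      have : z - 1 ≠ 0 := by
        have : z = -1 := by linear_combination hz1
        rw [this]; norm_num
      exact (IsUnit.smul (Units.mk0 _ this) isUnit_one)
    · have e2 : (z - 1) • (1 : Matrix (Fin n) (Fin n) ℂ) - (z + 1) • φ A =
          (z + 1) • (((z - 1) / (z + 1)) • (1 : Matrix (Fin n) (Fin n) ℂ) - φ A) := by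
        rw [smul_sub, smul_smul, mul_div_cancel₀ _ hz1]
      rw [e2]
      refine IsUnit.smul (Units.mk0 _ hz1) (hu _ ?_)
      rw [Complex.div_re, ← add_div]
      apply div_nonneg _ (Complex.normSq_nonneg _)
      have : 1 ≤ ‖z‖ ^ 2 := by nlinarith
      rw [Complex.sq_norm, Complex.normSq_apply] at this
      simp
      nlinarith
  obtain ⟨k, hk⟩ := pow_aux _ hC
  obtain ⟨P, hP, hQ⟩ := stein_aux _ k hk hn
  refine ⟨P, hP, ?_⟩
  have hinj : Function.Injective (1 - A).mulVec := by
    apply Matrix.mulVec_injective_of_isUnit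
    exact ⟨U, hU⟩
  have hfin := hQ.conjTranspose_mul_mul_same hinj
  have e3 : (1 - A)ᴴ * (P - ((1 + A) * R)ᵀ * P * ((1 + A) * R)) * (1 - A) =
      (2 : ℝ) • (-Aᵀ * P - P * A) := by
    have t : (1 - A)ᵀ * ((1 + A) * R)ᵀ = (1 + A)ᵀ := by
      rw [← Matrix.transpose_mul, mul_assoc, hR2, mul_one]
    have t2 : ((1 + A) * R) * (1 - A) = 1 + A := by rw [mul_assoc, hR2, mul_one]
    have : (1 - A)ᴴ = (1 - A)ᵀ := by simp
    have t3 : (1 - A)ᵀ * (P - ((1 + A) * R)ᵀ * P * ((1 + A) * R)) * (1 - A) =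
        (1 - A)ᵀ * P * (1 - A) -
          ((1 - A)ᵀ * ((1 + A) * R)ᵀ) * P * (((1 + A) * R) * (1 - A)) := by
      generalize ((1 + A) * R)ᵀ = X
      generalize (1 + A) * R = Y
      generalize (1 - A)ᵀ = Z
      generalize 1 - A = W
      noncomm_ring
    rw [this, t3, t, t2]
    simp only [Matrix.transpose_sub, Matrix.transpose_add, Matrix.transpose_one, two_smul]
    noncomm_ring
  rw [e3] at hfin
  have := hfin.smul (show (0 : ℝ) < 1 / 2 by norm_num)
  rw [smul_smul] at this
  norm_num at this
  simpa using this

/-- Lyapunov characterization of continuous-time stability: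
`A` is Hurwitz iff there is a symmetric positive definite `P` with
`−AᵀP − PA ≻ 0`. -/
theorem stmt4 {n : ℕ} (A : Matrix (Fin n) (Fin n) ℝ) :
    IsHurwitz A ↔
      ∃ P : Matrix (Fin n) (Fin n) ℝ, P.PosDef ∧ (-Aᵀ * P - P * A).PosDef := by
  constructor
  · intro hA
    rcases isEmpty_or_nonempty (Fin n) with he | hn
    · refine ⟨1, Matrix.PosDef.one, ?_⟩
      have : (-Aᵀ * 1 - 1 * A) = 1 := Subsingleton.elim _ _
      rw [this]
      exact Matrix.PosDef.one
    · exact forward_aux A hn hA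
  · rintro ⟨P, hP, hQ⟩
    exact reverse_aux A P hP hQ
end

section
/- Let A ∈ ℝ^{n×n}, B ∈ ℝ^{n×p}, and K ∈ ℝ^{p×n}. Then A + BK is Hurwitz if and only if there exist a symmetric positive definite M ∈ ℝ^{n×n} and L ∈ ℝ^{p×n} such that −MAᵀ − AM − LᵀBᵀ − BL is positive definite and K = LM⁻¹. -/
open Matrix

/-- lemma: a root of the characteristic polynomial has an eigenvector -/
theorem aux_root_iff {n : ℕ} (C : Matrix (Fin n) (Fin n) ℂ) (z : ℂ) :
    C.charpoly.IsRoot z ↔ ∃ v : Fin n → ℂ, v ≠ 0 ∧ C *ᵥ v = z • v := by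
  rw [Polynomial.IsRoot.def, Matrix.eval_charpoly, ← Matrix.exists_mulVec_eq_zero_iff]
  constructor
  · rintro ⟨v, hv, h⟩
    refine ⟨v, hv, ?_⟩
    rw [sub_mulVec, sub_eq_zero] at h
    rw [← h]
    simp
  · rintro ⟨v, hv, h⟩
    refine ⟨v, hv, ?_⟩
    rw [sub_mulVec, h]
    simp

theorem aux_rev {n : ℕ} (C M : Matrix (Fin n) (Fin n) ℝ) (hM : M.PosDef)
    (hQ : (-(M * Cᵀ) - C * M).PosDef) : IsHurwitz C := by
  intro z hz
  rw [← Matrix.charpoly_transpose, aux_root_iff] at hz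
  obtain ⟨v, hv, h⟩ := hz
  set a : Fin n → ℝ := fun i => (v i).re with ha
  set b : Fin n → ℝ := fun i => (v i).im with hb
  have h1 : Cᵀ *ᵥ a = z.re • a - z.im • b := by
    ext i
    have := congrArg Complex.re (congrFun h i)
    simpa [mulVec, dotProduct, ha, hb] using this
  have h2 : Cᵀ *ᵥ b = z.re • b + z.im • a := by
    ext i
    have := congrArg Complex.im (congrFun h i)
    simpa [mulVec, dotProduct, ha, hb] using this
  have hMt : Mᵀ = M := by simpa using hM.1.eq
  have key : ∀ x : Fin n → ℝ, x ⬝ᵥ ((-(M * Cᵀ) - C * M) *ᵥ x) = - 2 * (x ⬝ᵥ (M *ᵥ (Cᵀ *ᵥ x))) := by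
    intro x
    have e : x ⬝ᵥ (C *ᵥ (M *ᵥ x)) = x ⬝ᵥ (M *ᵥ (Cᵀ *ᵥ x)) := by
      rw [dotProduct_mulVec, dotProduct_mulVec x M, ← mulVec_transpose, ← mulVec_transpose M, hMt,
        dotProduct_comm]
    rw [sub_mulVec, neg_mulVec, ← mulVec_mulVec, ← mulVec_mulVec, dotProduct_sub, dotProduct_neg, e]
    ring
  have sym : a ⬝ᵥ (M *ᵥ b) = b ⬝ᵥ (M *ᵥ a) := by
    rw [dotProduct_mulVec, ← mulVec_transpose, hMt, dotProduct_comm]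
  have tot : a ⬝ᵥ ((-(M * Cᵀ) - C * M) *ᵥ a) + b ⬝ᵥ ((-(M * Cᵀ) - C * M) *ᵥ b)
      = - 2 * z.re * (a ⬝ᵥ (M *ᵥ a) + b ⬝ᵥ (M *ᵥ b)) := by
    rw [key, key, h1, h2]
    simp only [mulVec_sub, mulVec_add, mulVec_smul, dotProduct_sub, dotProduct_add, dotProduct_smul,
      smul_eq_mul, sym]
    ring
  have nn : ∀ {X : Matrix (Fin n) (Fin n) ℝ}, X.PosDef → 0 < a ⬝ᵥ (X *ᵥ a) + b ⬝ᵥ (X *ᵥ b) := by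
    intro X hX
    have p1 : 0 ≤ a ⬝ᵥ (X *ᵥ a) := by simpa using hX.posSemidef.dotProduct_mulVec_nonneg a
    have p2 : 0 ≤ b ⬝ᵥ (X *ᵥ b) := by simpa using hX.posSemidef.dotProduct_mulVec_nonneg b
    by_cases ha0 : a = 0
    · have hb0 : b ≠ 0 := by
        intro hb0
        apply hv
        ext i
        exact Complex.ext (congrFun ha0 i) (congrFun hb0 i)
      have : 0 < b ⬝ᵥ (X *ᵥ b) := by simpa using hX.dotProduct_mulVec_pos hb0
      linarith
    · have : 0 < a ⬝ᵥ (X *ᵥ a) := by simpa using hX.dotProduct_mulVec_pos ha0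
      linarith
  have q1 := nn hM
  have q2 := nn hQ
  rw [tot] at q2
  by_contra hneg
  push Not at hneg
  nlinarith [mul_nonneg hneg q1.le]

open scoped Matrix.Norms.L2Operator in
theorem aux_pow {n : ℕ} (hn : n ≠ 0) (W : Matrix (Fin n) (Fin n) ℂ)
    (h : ∀ w : ℂ, W.charpoly.IsRoot w → ‖w‖ < 1) : ∃ N : ℕ, N ≠ 0 ∧ ‖W ^ N‖ < 1 := by
  have : Nonempty (Fin n) := Fin.pos_iff_nonempty.mp (Nat.pos_of_ne_zero hn)
  have hr : spectralRadius ℂ W < ((1 : NNReal) : ENNReal) := by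
    apply spectrum.spectralRadius_lt_of_forall_lt
    intro z hz
    exact h z (Matrix.mem_spectrum_iff_isRoot_charpoly.1 hz)
  have ht := spectrum.pow_nnnorm_pow_one_div_tendsto_nhds_spectralRadius W
  obtain ⟨N, h1, h2⟩ := ((ht.eventually_lt_const hr).and (Filter.eventually_ge_atTop 1)).exists
  refine ⟨N, by omega, ?_⟩
  by_contra hc
  push Not at hc
  have h3 : (1 : ENNReal) ≤ (‖W ^ N‖₊ : ENNReal) := by exact_mod_cast hc
  have := ENNReal.one_le_rpow h3 (z := 1 / (N : ℝ)) (by positivity)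
  exact absurd h1 (not_lt.2 (by simpa using this))

open scoped Matrix.Norms.L2Operator in
theorem aux_posDef {n : ℕ} (Z : Matrix (Fin n) (Fin n) ℝ) (hZ : ‖Z.map Complex.ofReal‖ < 1) :
    (1 - Z * Zᵀ).PosDef := by
  refine .of_dotProduct_mulVec_pos ?_ ?_
  · simp [Matrix.IsHermitian]
  intro x hx
  set xc : EuclideanSpace ℂ (Fin n) := WithLp.toLp 2 (fun i => (x i : ℂ)) with hxc
  have h1 := Matrix.l2_opNorm_mulVec ((Z.map Complex.ofReal)ᴴ) xc
  rw [Matrix.l2_opNorm_conjTranspose] at h1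
  have e1 : ‖xc‖ ^ 2 = x ⬝ᵥ x := by
    rw [EuclideanSpace.norm_sq_eq]
    simp [hxc, dotProduct, sq]
  have e2 : ‖(EuclideanSpace.equiv (Fin n) ℂ).symm ((Z.map Complex.ofReal)ᴴ *ᵥ xc)‖ ^ 2
      = (Zᵀ *ᵥ x) ⬝ᵥ (Zᵀ *ᵥ x) := by
    have : ((Z.map Complex.ofReal)ᴴ *ᵥ xc) = fun i => (((Zᵀ *ᵥ x) i : ℝ) : ℂ) := by
      ext i
      simp [mulVec, dotProduct, hxc]
    rw [this, EuclideanSpace.norm_sq_eq]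
    simp [dotProduct, sq]
  have e3 : star x ⬝ᵥ ((1 - Z * Zᵀ) *ᵥ x) = x ⬝ᵥ x - (Zᵀ *ᵥ x) ⬝ᵥ (Zᵀ *ᵥ x) := by
    rw [sub_mulVec, one_mulVec, ← mulVec_mulVec, dotProduct_sub, star_trivial,
      dotProduct_mulVec x Z, ← mulVec_transpose]
  have hpos : 0 < x ⬝ᵥ x := by simpa using dotProduct_star_self_pos_iff.2 hx
  rw [e3, ← e1, ← e2]
  rw [← e1] at hpos
  have hx0 : 0 < ‖xc‖ := by
    rcases (norm_nonneg xc).eq_or_lt with h | h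
    · rw [← h] at hpos; simp at hpos
    · exact h
  have : ‖(EuclideanSpace.equiv (Fin n) ℂ).symm ((Z.map Complex.ofReal)ᴴ *ᵥ xc)‖ < ‖xc‖ :=
    h1.trans_lt (by nlinarith)
  have := pow_lt_pow_left₀ this (norm_nonneg _) two_ne_zero
  linarith

theorem aux_fwd {n : ℕ} (C : Matrix (Fin n) (Fin n) ℝ) (hC : IsHurwitz C) :
    ∃ M : Matrix (Fin n) (Fin n) ℝ, M.PosDef ∧ (-(M * Cᵀ) - C * M).PosDef := by
  rcases eq_or_ne n 0 with rfl | hn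
  · refine ⟨1, .one, ?_⟩
    rw [Subsingleton.elim (-(1 * Cᵀ) - C * 1) 1]
    exact .one
  let φ : Matrix (Fin n) (Fin n) ℝ →+* Matrix (Fin n) (Fin n) ℂ := Complex.ofRealHom.mapMatrix
  have hφ : ∀ X, φ X = X.map Complex.ofReal := fun X => rfl
  have hdet : IsUnit (1 - C).det := by
    rw [isUnit_iff_ne_zero]
    intro h0
    have h1 : (C.map Complex.ofReal).charpoly.IsRoot 1 := by
      rw [Polynomial.IsRoot.def, Matrix.eval_charpoly, ← hφ]
      have : (Matrix.scalar (Fin n)) (1 : ℂ) - φ C = φ (1 - C) := by simp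
      rw [this]
      have := (RingHom.map_det Complex.ofRealHom (1 - C)).symm
      rw [h0, map_zero] at this
      exact this
    have := hC 1 h1
    norm_num at this
  set W := (1 - C)⁻¹ * (1 + C) with hW
  have hSW : (1 - C) * W = 1 + C := by rw [hW, Matrix.mul_nonsing_inv_cancel_left _ _ hdet]
  have hspec : ∀ w : ℂ, (φ W).charpoly.IsRoot w → ‖w‖ < 1 := by
    intro w hw
    obtain ⟨v, hv, h⟩ := (aux_root_iff _ _).1 hw
    have h1 : (1 + φ C) *ᵥ v = w • ((1 - φ C) *ᵥ v) := by
      have := congrArg φ hSW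
      rw [map_mul, map_sub, map_add, map_one] at this
      rw [← this, ← mulVec_mulVec, h, mulVec_smul]
    rw [add_mulVec, sub_mulVec, one_mulVec, smul_sub] at h1
    have h2 : (w + 1) • (φ C *ᵥ v) = (w - 1) • v := by
      rw [add_smul, sub_smul, one_smul, one_smul]
      linear_combination (exp := 1) h1
    have hw1 : w + 1 ≠ 0 := by
      intro h0
      have : w = -1 := by linear_combination h0
      rw [h0, zero_smul, this] at h2
      have := (smul_eq_zero.1 h2.symm).resolve_right hv
      norm_num at this
    have h3 : φ C *ᵥ v = ((w - 1) / (w + 1)) • v := by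
      rw [div_eq_inv_mul, mul_smul, ← h2, smul_smul, inv_mul_cancel₀ hw1, one_smul]
    have h4 := hC _ ((aux_root_iff _ _).2 ⟨v, hv, h3⟩)
    have hns : 0 < Complex.normSq (w + 1) := Complex.normSq_pos.2 hw1
    rw [Complex.div_re, ← add_div, div_lt_iff₀ hns] at h4
    simp at h4
    have h5 : ‖w‖ ^ 2 < 1 := by
      rw [Complex.sq_norm, Complex.normSq_apply]
      nlinarith
    nlinarith [norm_nonneg w]
  obtain ⟨N, hN, hlt⟩ := aux_pow hn (φ W) hspec
  rw [← map_pow, hφ] at hlt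
  have hD := aux_posDef _ hlt
  set P := ∑ k ∈ Finset.range N, W ^ k * (W ^ k)ᵀ with hP
  have hPpos : P.PosDef := by
    obtain ⟨m, rfl⟩ := Nat.exists_eq_succ_of_ne_zero hN
    rw [hP, Finset.sum_range_succ']
    refine PosDef.posSemidef_add ?_ (by simpa using PosDef.one)
    refine Matrix.posSemidef_sum _ fun i _ => ?_
    simpa using Matrix.posSemidef_self_mul_conjTranspose (W ^ (i + 1))
  have htel : P - W * P * Wᵀ = 1 - W ^ N * (W ^ N)ᵀ := by
    have := Finset.sum_range_sub' (fun k => W ^ k * (W ^ k)ᵀ) N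
    simp only [pow_zero, transpose_one, mul_one] at this
    rw [← this, Finset.sum_sub_distrib, hP, Finset.mul_sum, Finset.sum_mul]
    congr 1
    refine Finset.sum_congr rfl fun k _ => ?_
    rw [pow_succ', transpose_mul W]
    simp only [mul_assoc]
  refine ⟨P + P, hPpos.add hPpos, ?_⟩
  have hfin : -((P + P) * Cᵀ) - C * (P + P) = (1 - C) * (1 - W ^ N * (W ^ N)ᵀ) * (1 - C)ᴴ := by
    have e : (1 - C) * (W * P * Wᵀ) * (1 - C)ᵀ = (1 + C) * P * (1 + C)ᵀ := by
      rw [← hSW, transpose_mul (1 - C) W]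
      simp only [mul_assoc]
    rw [← htel, conjTranspose_eq_transpose_of_trivial, mul_sub, sub_mul, e, transpose_sub,
      transpose_add, transpose_one]
    noncomm_ring
  rw [hfin]
  refine hD.mul_mul_conjTranspose_same ?_
  exact Matrix.vecMul_injective_of_isUnit ((Matrix.isUnit_iff_isUnit_det _).2 hdet)

/-- Full-state feedback stabilization LMI: the closed loop `A + BK` is Hurwitz
iff there are `M ≻ 0` (symmetric) and `L` with
`−MAᵀ − AM − LᵀBᵀ − BL ≻ 0` and `K = L M⁻¹`. -/
theorem stmt6 {n p : ℕ}
    (A : Matrix (Fin n) (Fin n) ℝ) (B : Matrix (Fin n) (Fin p) ℝ)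
    (K : Matrix (Fin p) (Fin n) ℝ) :
    IsHurwitz (A + B * K) ↔
      ∃ (M : Matrix (Fin n) (Fin n) ℝ) (L : Matrix (Fin p) (Fin n) ℝ),
        M.PosDef ∧ (-(M * Aᵀ) - A * M - Lᵀ * Bᵀ - B * L).PosDef ∧ K = L * M⁻¹ := by
  have key : ∀ M : Matrix (Fin n) (Fin n) ℝ, M.PosDef →
      -(M * Aᵀ) - A * M - (K * M)ᵀ * Bᵀ - B * (K * M)
        = -(M * (A + B * K)ᵀ) - (A + B * K) * M := by
    intro M hM
    have hMt : Mᵀ = M := by simpa using hM.1.eq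
    simp only [transpose_mul, transpose_add, hMt, Matrix.mul_add, Matrix.add_mul, Matrix.mul_assoc]
    abel
  constructor
  · intro h
    obtain ⟨M, hM, hQ⟩ := aux_fwd _ h
    refine ⟨M, K * M, hM, ?_, ?_⟩
    · rw [key M hM]; exact hQ
    · rw [Matrix.mul_nonsing_inv_cancel_right _ _ ((Matrix.isUnit_iff_isUnit_det _).1 hM.isUnit)]
  · rintro ⟨M, L, hM, hQ, hK⟩
    have hL : L = K * M := by
      rw [hK, Matrix.nonsing_inv_mul_cancel_right _ _ ((Matrix.isUnit_iff_isUnit_det _).1 hM.isUnit)]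
    rw [hL, key M hM] at hQ
    exact aux_rev _ M hM hQ
end

section
/- Let A ∈ ℝ^{n×n}, B ∈ ℝ^{n×p}, C ∈ ℝ^{m×n}. The following are equivalent: (i) there exist matrices A_c ∈ ℝ^{n×n}, B_c ∈ ℝ^{n×m}, C_c ∈ ℝ^{p×n}, D_c ∈ ℝ^{p×m} and a symmetric positive definite P ∈ ℝ^{2n×2n} such that [[P, ĀᵀP], [PĀ, P]] is positive definite, where Ā = [[A + B D_c C, B C_c], [B_c C, A_c]]; (ii) there exist symmetric positive definite X, Y ∈ ℝ^{n×n} and matrices A_n ∈ ℝ^{n×n}, B_n ∈ ℝ^{n×m}, C_n ∈ ℝ^{p×n}, D_n ∈ ℝ^{p×m} such that [[Y, I], [I, X]] is positive definite and the 4×4 block matrix [[Y, I, YAᵀ + C_nᵀBᵀ, A_nᵀ], [⋆, X, Aᵀ + CᵀD_nᵀBᵀ, AᵀX + CᵀB_nᵀ], [⋆, ⋆, Y, I], [⋆, ⋆, ⋆, X]] is positive definite. -/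
open Matrix

/-- A 4×4 block matrix assembled from its sixteen blocks. -/
def block4 {I J K L : Type*}
    (M11 : Matrix I I ℝ) (M12 : Matrix I J ℝ) (M13 : Matrix I K ℝ) (M14 : Matrix I L ℝ)
    (M21 : Matrix J I ℝ) (M22 : Matrix J J ℝ) (M23 : Matrix J K ℝ) (M24 : Matrix J L ℝ)
    (M31 : Matrix K I ℝ) (M32 : Matrix K J ℝ) (M33 : Matrix K K ℝ) (M34 : Matrix K L ℝ)
    (M41 : Matrix L I ℝ) (M42 : Matrix L J ℝ) (M43 : Matrix L K ℝ) (M44 : Matrix L L ℝ) :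
    Matrix ((I ⊕ J) ⊕ (K ⊕ L)) ((I ⊕ J) ⊕ (K ⊕ L)) ℝ :=
  Matrix.fromBlocks (Matrix.fromBlocks M11 M12 M21 M22)
    (Matrix.fromBlocks M13 M14 M23 M24)
    (Matrix.fromBlocks M31 M32 M41 M42)
    (Matrix.fromBlocks M33 M34 M43 M44)

theorem aux_key {n p m : ℕ}
    (A : Matrix (Fin n) (Fin n) ℝ) (B : Matrix (Fin n) (Fin p) ℝ)
    (C : Matrix (Fin m) (Fin n) ℝ)
    (X Y N S V V' Ac An : Matrix (Fin n) (Fin n) ℝ) (Bc Bn : Matrix (Fin n) (Fin m) ℝ)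
    (Cc Cn : Matrix (Fin p) (Fin n) ℝ) (D : Matrix (Fin p) (Fin m) ℝ)
    (hX : Xᵀ = X) (hY : Yᵀ = Y) (hS : Sᵀ = S)
    (hV : V * V' = 1)
    (h1 : X * Y + N * V = 1) (h2 : Nᵀ * Y + S * V = 0)
    (hC : Cn = D * C * Y + Cc * V) (hB : Bn = X * B * D + N * Bc)
    (hA : An = X * (A + B * D * C) * Y + X * B * Cc * V + N * Bc * C * Y + N * Ac * V) :
    ((fromBlocks X N Nᵀ S).PosDef ↔ (fromBlocks Y (1 : Matrix (Fin n) (Fin n) ℝ) 1 X).PosDef) ∧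
    ((fromBlocks (fromBlocks X N Nᵀ S)
        ((fromBlocks (A + B * D * C) (B * Cc) (Bc * C) Ac)ᵀ * (fromBlocks X N Nᵀ S))
        ((fromBlocks X N Nᵀ S) * (fromBlocks (A + B * D * C) (B * Cc) (Bc * C) Ac))
        (fromBlocks X N Nᵀ S)).PosDef ↔
      (block4 Y (1 : Matrix (Fin n) (Fin n) ℝ) (Y * Aᵀ + Cnᵀ * Bᵀ) Anᵀ
        (1 : Matrix (Fin n) (Fin n) ℝ) X (Aᵀ + Cᵀ * Dᵀ * Bᵀ) (Aᵀ * X + Cᵀ * Bnᵀ)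
        (Y * Aᵀ + Cnᵀ * Bᵀ)ᵀ (Aᵀ + Cᵀ * Dᵀ * Bᵀ)ᵀ Y (1 : Matrix (Fin n) (Fin n) ℝ)
        An (Aᵀ * X + Cᵀ * Bnᵀ)ᵀ (1 : Matrix (Fin n) (Fin n) ℝ) X).PosDef) := by
  set P := fromBlocks X N Nᵀ S with hP
  set F := fromBlocks (A + B * D * C) (B * Cc) (Bc * C) Ac with hF
  set T : Matrix (Fin n ⊕ Fin n) (Fin n ⊕ Fin n) ℝ := fromBlocks Y 1 V 0 with hT
  have hTu : T * fromBlocks (0 : Matrix (Fin n) (Fin n) ℝ) V' (1 : Matrix (Fin n) (Fin n) ℝ) (-(Y * V')) = 1 := by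
    rw [hT, fromBlocks_multiply, ← fromBlocks_one]
    simp [hV]
  have hPT : P * T = fromBlocks (1 : Matrix (Fin n) (Fin n) ℝ) X 0 Nᵀ := by
    rw [hT, hP, fromBlocks_multiply]; simp [h1, h2]
  have hPs : Pᵀ = P := by
    rw [hP, fromBlocks_transpose]; simp [hX, hS]
  have hTP : Tᵀ * P = fromBlocks (1 : Matrix (Fin n) (Fin n) ℝ) 0 X N := by
    have := congrArg transpose hPT
    rw [transpose_mul, hPs, fromBlocks_transpose 1 X 0 Nᵀ] at this
    simpa [hX] using this
  have hTPT : Tᵀ * P * T = fromBlocks Y 1 1 X := by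
    rw [hTP, hT, fromBlocks_multiply]; simp [h1]
  have hTPFT : Tᵀ * (P * F) * T = fromBlocks (Y * Aᵀ + Cnᵀ * Bᵀ)ᵀ (Aᵀ + Cᵀ * Dᵀ * Bᵀ)ᵀ
        An (Aᵀ * X + Cᵀ * Bnᵀ)ᵀ := by
    rw [← Matrix.mul_assoc, hTP, hF, hT, fromBlocks_multiply, fromBlocks_multiply, hC, hA, hB]
    congr 1 <;>
    simp [hX, hY, Matrix.mul_add, Matrix.add_mul, Matrix.mul_assoc] <;> abel
  have hTFPT : Tᵀ * (Fᵀ * P) * T = fromBlocks (Y * Aᵀ + Cnᵀ * Bᵀ) Anᵀ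
      (Aᵀ + Cᵀ * Dᵀ * Bᵀ) (Aᵀ * X + Cᵀ * Bnᵀ) := by
    have := congrArg transpose hTPFT
    rw [fromBlocks_transpose (Y * Aᵀ + Cnᵀ * Bᵀ)ᵀ, transpose_mul, transpose_mul, transpose_mul,
      hPs] at this
    simp only [transpose_transpose] at this
    rw [← this, Matrix.mul_assoc]
  have uT : IsUnit T := by
    rw [Matrix.isUnit_iff_isUnit_det]
    exact Matrix.isUnit_det_of_right_inverse hTu
  have uTT : IsUnit (fromBlocks T 0 0 T) := by
    rw [Matrix.isUnit_iff_isUnit_det, det_fromBlocks_zero₂₁]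
    have := (Matrix.isUnit_iff_isUnit_det _).1 uT
    exact this.mul this
  constructor
  · rw [← Matrix.IsUnit.posDef_star_left_conjugate_iff uT, ← hTPT]
    rfl
  · rw [← Matrix.IsUnit.posDef_star_left_conjugate_iff uTT]
    have : star (fromBlocks T 0 0 T) = fromBlocks Tᵀ 0 0 Tᵀ := by
      rw [star_eq_conjTranspose, fromBlocks_conjTranspose]
      simp
    rw [this, fromBlocks_multiply, fromBlocks_multiply, block4, ← hTPFT, ← hTFPT, ← hTPT]
    simp

theorem aux_open {ι : Type*} [Fintype ι] (M E : Matrix ι ι ℝ)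
    (hM : M.PosDef) (hE : E.IsHermitian) :
    ∃ ε : ℝ, 0 < ε ∧ ∀ t, 0 < t → t < ε → (M + t • E).PosDef := by
  classical
  have hc : ∀ K : Matrix ι ι ℝ, Continuous fun x : EuclideanSpace ℝ ι => (x : ι → ℝ) ⬝ᵥ K *ᵥ (x : ι → ℝ) := by
    intro K
    simp only [dotProduct, mulVec]
    fun_prop
  have hcomp : IsCompact (Metric.sphere (0 : EuclideanSpace ℝ ι) 1) := isCompact_sphere _ _
  obtain ⟨c, hc0, hcM⟩ : ∃ c : ℝ, 0 < c ∧ ∀ x ∈ Metric.sphere (0 : EuclideanSpace ℝ ι) 1,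
      c ≤ (x : ι → ℝ) ⬝ᵥ M *ᵥ (x : ι → ℝ) := by
    apply hcomp.exists_forall_le' (hc M).continuousOn
    intro x hx
    have hx0 : (x : ι → ℝ) ≠ 0 := by
      intro h
      have : x = 0 := by ext i; exact congrFun h i
      simp [this] at hx
    simpa using hM.dotProduct_mulVec_pos hx0
  obtain ⟨b, hb⟩ := hcomp.exists_bound_of_continuousOn (hc E).continuousOn
  have hb1 : 0 < |b| + 1 := by positivity
  refine ⟨c / (|b| + 1), by positivity, fun t ht hte => ?_⟩
  refine PosDef.of_dotProduct_mulVec_pos (hM.1.add (by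
    rw [IsHermitian, conjTranspose_smul, hE.eq]; simp)) ?_
  intro v hv
  set x : EuclideanSpace ℝ ι := WithLp.toLp 2 v with hx
  have hx0 : x ≠ 0 := by
    intro h; apply hv; ext i; exact congrFun (congrArg WithLp.ofLp h) i
  have hn : 0 < ‖x‖ := norm_pos_iff.2 hx0
  have hs : (‖x‖⁻¹ • x) ∈ Metric.sphere (0 : EuclideanSpace ℝ ι) 1 := by
    simp [norm_smul, hn.ne']
  have e1 := hcM _ hs
  have e2 := hb _ hs
  rw [Real.norm_eq_abs] at e2
  have e3 := (abs_le.1 e2).1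
  have e4 : b ≤ |b| := le_abs_self b
  rw [lt_div_iff₀ hb1] at hte
  simp only [WithLp.ofLp_smul, mulVec_smul, dotProduct_smul, smul_dotProduct, smul_eq_mul, hx] at e1 e3
  simp only [star_trivial, add_mulVec, smul_mulVec, dotProduct_add, dotProduct_smul, smul_eq_mul]
  set q := v ⬝ᵥ M *ᵥ v
  set r := v ⬝ᵥ E *ᵥ v
  rw [← hx] at e1 e3
  have hi : 0 < ‖x‖⁻¹ := inv_pos.2 hn
  have : 0 < ‖x‖⁻¹ * (‖x‖⁻¹ * (q + t * r)) := by
    have : t * (-b) ≤ t * (‖x‖⁻¹ * (‖x‖⁻¹ * r)) := mul_le_mul_of_nonneg_left e3 ht.le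
    nlinarith
  exact (mul_pos_iff_of_pos_left hi).1 ((mul_pos_iff_of_pos_left hi).1 this)

/-- Discrete-time dynamic output feedback stabilization: the closed-loop
discrete-time Lyapunov LMI is feasible (in the controller matrices and
`P ≻ 0`) iff the change-of-variables LMIs (in `X, Y ≻ 0` and
`Aₙ, Bₙ, Cₙ, Dₙ`) are feasible. -/
theorem stmt19 {n p m : ℕ}
    (A : Matrix (Fin n) (Fin n) ℝ) (B : Matrix (Fin n) (Fin p) ℝ)
    (C : Matrix (Fin m) (Fin n) ℝ) :
    (∃ (Ac : Matrix (Fin n) (Fin n) ℝ) (Bc : Matrix (Fin n) (Fin m) ℝ)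
       (Cc : Matrix (Fin p) (Fin n) ℝ) (Dc : Matrix (Fin p) (Fin m) ℝ)
       (P : Matrix (Fin n ⊕ Fin n) (Fin n ⊕ Fin n) ℝ),
      P.PosDef ∧
      (Matrix.fromBlocks P
        ((Matrix.fromBlocks (A + B * Dc * C) (B * Cc) (Bc * C) Ac)ᵀ * P)
        (P * (Matrix.fromBlocks (A + B * Dc * C) (B * Cc) (Bc * C) Ac))
        P).PosDef) ↔
    (∃ (X Y : Matrix (Fin n) (Fin n) ℝ) (An : Matrix (Fin n) (Fin n) ℝ)
       (Bn : Matrix (Fin n) (Fin m) ℝ) (Cn : Matrix (Fin p) (Fin n) ℝ)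
       (Dn : Matrix (Fin p) (Fin m) ℝ),
      X.PosDef ∧ Y.PosDef ∧
      (Matrix.fromBlocks Y (1 : Matrix (Fin n) (Fin n) ℝ)
        (1 : Matrix (Fin n) (Fin n) ℝ) X).PosDef ∧
      (block4 Y (1 : Matrix (Fin n) (Fin n) ℝ) (Y * Aᵀ + Cnᵀ * Bᵀ) Anᵀ
        (1 : Matrix (Fin n) (Fin n) ℝ) X (Aᵀ + Cᵀ * Dnᵀ * Bᵀ) (Aᵀ * X + Cᵀ * Bnᵀ)
        (Y * Aᵀ + Cnᵀ * Bᵀ)ᵀ (Aᵀ + Cᵀ * Dnᵀ * Bᵀ)ᵀ Y (1 : Matrix (Fin n) (Fin n) ℝ)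
        An (Aᵀ * X + Cᵀ * Bnᵀ)ᵀ (1 : Matrix (Fin n) (Fin n) ℝ) X).PosDef) := by
  constructor
  · rintro ⟨Ac, Bc, Cc, D, P, hP, hL⟩
    set F := fromBlocks (A + B * D * C) (B * Cc) (Bc * C) Ac with hF
    have hPs : Pᵀ = P := by simpa using hP.1.eq
    set E : Matrix (Fin n ⊕ Fin n) (Fin n ⊕ Fin n) ℝ := fromBlocks 0 1 1 0 with hE
    have hEs : Eᵀ = E := by rw [hE, fromBlocks_transpose]; simp
    obtain ⟨ε, hε, hopen⟩ := aux_open _ (fromBlocks E (Fᵀ * E) (E * F) E) hL (by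
      rw [IsHermitian, fromBlocks_conjTranspose]
      simp [hEs])
    obtain ⟨t, ht, htr⟩ : ∃ t ∈ Set.Ioo (0 : ℝ) ε, t ∉ {t : ℝ | (charpoly (-P.toBlocks₁₂)).IsRoot t} :=
      (Set.Ioo_infinite hε).exists_notMem_finite
        (Polynomial.finite_setOf_isRoot (charpoly_monic _).ne_zero)
    have hL' := hopen t ht.1 ht.2
    set X := P.toBlocks₁₁ with hX
    set N := P.toBlocks₁₂ + t • (1 : Matrix (Fin n) (Fin n) ℝ) with hN
    set S := P.toBlocks₂₂ with hS
    have hNu : IsUnit N := by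
      rw [isUnit_iff_isUnit_det, isUnit_iff_ne_zero]
      intro h
      apply htr
      rw [Set.mem_setOf_eq, Polynomial.IsRoot, eval_charpoly, ← h, hN]
      congr 1
      rw [sub_neg_eq_add, add_comm, smul_one_eq_diagonal]
      rfl
    have hPE : P + t • E = fromBlocks X N Nᵀ S := by
      have h21 : P.toBlocks₂₁ = (P.toBlocks₁₂)ᵀ := by
        ext i j
        exact congrFun (congrFun hPs.symm _) _
      rw [← fromBlocks_toBlocks P, hE, fromBlocks_smul, fromBlocks_add, h21]
      simp [hX, hN, hS]
    rw [fromBlocks_smul, fromBlocks_add, ← Matrix.mul_smul, ← Matrix.smul_mul, ← Matrix.mul_add,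
      ← Matrix.add_mul, hPE] at hL'
    have hP' : (fromBlocks X N Nᵀ S).PosDef := hL'.submatrix Sum.inl_injective
    have hPX : X.PosDef := hP'.submatrix Sum.inl_injective
    have hPS : S.PosDef := hP'.submatrix Sum.inr_injective
    set Q := (fromBlocks X N Nᵀ S)⁻¹ with hQ
    have hQp : Q.PosDef := hP'.inv
    set Y := Q.toBlocks₁₁ with hY
    set V := Q.toBlocks₂₁ with hV
    have hPY : Y.PosDef := hQp.submatrix Sum.inl_injective
    have hPQ : fromBlocks X N Nᵀ S * Q = 1 :=
      mul_nonsing_inv _ ((isUnit_iff_isUnit_det _).1 hP'.isUnit)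
    rw [← fromBlocks_toBlocks Q, fromBlocks_multiply, ← fromBlocks_one, fromBlocks_inj] at hPQ
    obtain ⟨h1, -, h2, -⟩ := hPQ
    have hVu : IsUnit V.det := by
      have h3 : S * V = -(Nᵀ * Y) := by rw [eq_neg_iff_add_eq_zero, add_comm]; exact h2
      have h4 : IsUnit (S * V) := by
        rw [h3]
        exact (((isUnit_transpose N).2 hNu).mul hPY.isUnit).neg
      rw [isUnit_iff_isUnit_det, det_mul] at h4
      exact isUnit_of_mul_isUnit_right h4
    have key := aux_key A B C X Y N S V V⁻¹ Ac _ Bc _ Cc _ D (by simpa using hPX.1.eq)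
      (by simpa using hPY.1.eq) (by simpa using hPS.1.eq) (mul_nonsing_inv _ hVu) h1 h2 rfl rfl rfl
    exact ⟨X, Y, _, _, _, D, hPX, hPY, key.1.1 hP', key.2.1 hL'⟩
  · rintro ⟨X, Y, An, Bn, Cn, D, hX, hY, hXY, hL⟩
    have hXs : Xᵀ = X := by simpa using hX.1.eq
    have hYs : Yᵀ = Y := by simpa using hY.1.eq
    have hYu := (isUnit_iff_isUnit_det _).1 hY.isUnit
    have hYY := nonsing_inv_mul Y hYu
    have hYY' := mul_nonsing_inv Y hYu
    set Z := X - Y⁻¹ with hZ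
    have hZs : Zᵀ = Z := by rw [hZ, transpose_sub, transpose_nonsing_inv, hXs, hYs]
    have hZu : IsUnit Z.det := by
      have h := (isUnit_iff_isUnit_det _).1 hXY.isUnit
      haveI := invertibleOfIsUnitDet Y hYu
      rw [det_fromBlocks₁₁] at h
      simpa using isUnit_of_mul_isUnit_right h
    have hZZ := mul_nonsing_inv Z hZu
    have hW : ∀ W : Matrix (Fin n) (Fin n) ℝ, Z * (Z⁻¹ * W * (-Y⁻¹)) * (-Y) = W := by
      intro W
      rw [Matrix.mul_assoc, Matrix.mul_assoc (Z⁻¹ * W), neg_mul_neg, hYY, Matrix.mul_one,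
        ← Matrix.mul_assoc, hZZ, Matrix.one_mul]
    have key := aux_key A B C X Y Z Z (-Y) (-Y⁻¹)
      (Z⁻¹ * (An - X * (A + B * D * C) * Y - X * B * ((Cn - D * C * Y) * (-Y⁻¹)) * (-Y)
        - Z * (Z⁻¹ * (Bn - X * B * D)) * C * Y) * (-Y⁻¹)) An
      (Z⁻¹ * (Bn - X * B * D)) Bn ((Cn - D * C * Y) * (-Y⁻¹)) Cn D hXs hYs hZs
      (by simp [hYY']) (by simp [hZ, Matrix.sub_mul, hYY]) (by simp [hZs])
      (by simp [Matrix.mul_assoc, hYY])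
      (by rw [← Matrix.mul_assoc, hZZ]; simp)
      (by
        rw [hW]
        abel)
    exact ⟨_, _, _, D, _, key.1.2 hXY, key.2.2 hL⟩
end
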